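/- Let α > -1, s ∈ ℕ, 0 ≤ k ≤ s-1, 1 ≤ q ≤ ∞, and let p be the conjugate exponent of q (1/p + 1/q = 1). Suppose either (a) β = 0, or (b) s = 1 and β < p/2 - 1 if 1 ≤ q < ∞, β ≤ -1/2 if q = ∞. Then there is a constant c > 0 such that for every g ∈ L^q(w_{α,β}), ‖φ^{s-k} · u_{g,k}^{(2s-k)}‖_{L^q(w_{α,β})} ≤ c ‖g‖_{L^q(w_{α,β})}, where φ(x) = √(1-x²) and u_{g,k}^{(2s-k)} is the (2s-k)-th derivative of u_{g,k} (defined almost everywhere). -/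

import Mathlib

open MeasureTheory Set ENNReal NNReal

noncomputable section

namespace JacobiApprox

/-- The Jacobi weight `w_{α,β}(x) = (1-x)^α (1+x)^β` on `(-1,1)`. -/
def w (α β x : ℝ) : ℝ := (1 - x) ^ α * (1 + x) ^ β

/-- The weighted `L^p` norm `‖f‖_{L^p(w_{α,β})}`; for `p = ∞` it is the uniform
norm on `[-1,1]`. -/
def LpW (α β : ℝ) (p : ℝ≥0∞) (f : ℝ → ℝ) : ℝ :=
  if p = ⊤ then sSup ((fun x => |f x|) '' Icc (-1 : ℝ) 1)
  else (∫ x in Ioo (-1 : ℝ) 1, |f x| ^ p.toReal * w α β x) ^ (1 / p.toReal)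

/-- Membership in `L^p(w_{α,β})` (`f ∈ C[-1,1]` when `p = ∞`). -/
def MemLpW (α β : ℝ) (p : ℝ≥0∞) (f : ℝ → ℝ) : Prop :=
  Measurable f ∧
    (p ≠ ⊤ → IntegrableOn (fun x => |f x| ^ p.toReal * w α β x) (Ioo (-1 : ℝ) 1)) ∧
    (p = ⊤ → ContinuousOn f (Icc (-1 : ℝ) 1))

/-- `E_n(f)_{L^p(w_{α,β})}`: the error of best approximation of `f` by polynomials
of degree at most `n` in `L^p(w_{α,β})`. -/
def E (α β : ℝ) (p : ℝ≥0∞) (n : ℕ) (f : ℝ → ℝ) : ℝ :=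
  sInf {r : ℝ | ∃ q : Polynomial ℝ, q.natDegree ≤ n ∧
    r = LpW α β p (fun x => f x - q.eval x)}

/-- Membership in the Sobolev space `W_p^s(w_{α,β})`: `f` has `s` continuous
derivatives and `f^{(s)} ∈ L^p(w_{α,β})` (for `p = ∞` this is `f ∈ C^s[-1,1]`). -/
def MemW (α β : ℝ) (p : ℝ≥0∞) (s : ℕ) (f : ℝ → ℝ) : Prop :=
  ContDiff ℝ (s : ℕ∞) f ∧
    (p ≠ ⊤ → IntegrableOn (fun x => |iteratedDeriv s f x| ^ p.toReal * w α β x)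
      (Ioo (-1 : ℝ) 1))

/-- The Sobolev norm `‖f‖_{W_p^s(w_{α,β})}` (max over derivatives when `p = ∞`). -/
def WNorm (α β : ℝ) (p : ℝ≥0∞) (s : ℕ) (f : ℝ → ℝ) : ℝ :=
  if p = ⊤ then
    (Finset.range (s + 1)).sup' (Finset.nonempty_range_iff.mpr (Nat.succ_ne_zero s))
      (fun k => LpW α β ⊤ (iteratedDeriv k f))
  else (∑ k ∈ Finset.range (s + 1), (LpW α β p (iteratedDeriv k f)) ^ p.toReal) ^
    (1 / p.toReal)

/-- Pochhammer symbol (rising factorial) `(a)_k`. -/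
def poch (a : ℝ) (k : ℕ) : ℝ := ∏ i ∈ Finset.range k, (a + i)

/-- The Jacobi polynomial `P_n^{(α,β)}`. -/
def JP (α β : ℝ) (n : ℕ) (t : ℝ) : ℝ :=
  (poch (α + 1) n / n.factorial) *
    ∑ k ∈ Finset.range (n + 1),
      poch (-(n : ℝ)) k * poch ((n : ℝ) + α + β + 1) k /
        (poch (α + 1) k * k.factorial) * ((1 - t) / 2) ^ k

/-- The renormalized Jacobi polynomial `J_n^{α,β} = 2^n/(n+α+β+1)_n · P_n^{(α,β)}`. -/
def J (α β : ℝ) (n : ℕ) (t : ℝ) : ℝ :=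
  2 ^ n / poch ((n : ℝ) + α + β + 1) n * JP α β n t

/-- The inner product `⟨f,g⟩_{α,β} = ∫_{-1}^1 f g w_{α,β}`. -/
def ip (α β : ℝ) (f g : ℝ → ℝ) : ℝ := ∫ x in Ioo (-1 : ℝ) 1, f x * g x * w α β x

/-- `h_n^{α,β} = ⟨J_n^{α,β}, J_n^{α,β}⟩_{α,β}`. -/
def hJ (α β : ℝ) (n : ℕ) : ℝ := ip α β (J α β n) (J α β n)

/-- The Fourier–Jacobi coefficient `\hat f_n^{α,β}`. -/
def coeff (α β : ℝ) (n : ℕ) (f : ℝ → ℝ) : ℝ := ip α β f (J α β n) / hJ α β n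

/-- The `n`-th partial sum `S_n^{α,β} f` of the Fourier–Jacobi series. -/
def S (α β : ℝ) (n : ℕ) (f : ℝ → ℝ) (x : ℝ) : ℝ :=
  ∑ k ∈ Finset.range (n + 1), coeff α β k f * J α β k x

/-- An admissible cut-off function: `C^∞`, `η ≡ 1` on `[0,1]`, `η ≡ 0` on `[2,∞)`. -/
def Admissible (η : ℝ → ℝ) : Prop :=
  ContDiff ℝ (⊤ : ℕ∞) η ∧ (∀ t : ℝ, 0 ≤ t → t ≤ 1 → η t = 1) ∧ ∀ t : ℝ, 2 ≤ t → η t = 0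

/-- The de la Vallée Poussin type operator `V_n^{α,β} f`. -/
def V (η : ℝ → ℝ) (α β : ℝ) (n : ℕ) (f : ℝ → ℝ) (x : ℝ) : ℝ :=
  ∑ k ∈ Finset.range (2 * n + 1), η ((k : ℝ) / (n : ℝ)) * coeff α β k f * J α β k x

/-- The Sobolev orthogonal polynomial `𝒥_{n,θ}^{α-s,β-s}`. -/
def SJ (α β : ℝ) (s : ℕ) (θ : ℝ) (n : ℕ) (x : ℝ) : ℝ :=
  if n < s then (x - θ) ^ n / n.factorial
  else ∫ t in θ..x, (x - t) ^ (s - 1) / (s - 1).factorial * J α β (n - s) t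

/-- The Sobolev inner product `⟨f,g⟩_{α,β}^{-s}`. -/
def ipS (α β : ℝ) (s : ℕ) (θ : ℝ) (lam : ℕ → ℝ) (f g : ℝ → ℝ) : ℝ :=
  ip α β (iteratedDeriv s f) (iteratedDeriv s g) +
    ∑ k ∈ Finset.range s, lam k * iteratedDeriv k f θ * iteratedDeriv k g θ

/-- The Fourier coefficient `\hat{𝔣}_n^{α-s,β-s}` in the Sobolev orthogonal system. -/
def coeffS (α β : ℝ) (s : ℕ) (θ : ℝ) (lam : ℕ → ℝ) (n : ℕ) (f : ℝ → ℝ) : ℝ :=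
  ipS α β s θ lam f (SJ α β s θ n) / ipS α β s θ lam (SJ α β s θ n) (SJ α β s θ n)

/-- The `n`-th partial sum `𝒮_{n,θ}^{α-s,β-s} f` of the Sobolev orthogonal expansion. -/
def SS (α β : ℝ) (s : ℕ) (θ : ℝ) (lam : ℕ → ℝ) (n : ℕ) (f : ℝ → ℝ) (x : ℝ) : ℝ :=
  ∑ k ∈ Finset.range (n + 1), coeffS α β s θ lam k f * SJ α β s θ k x

/-- The operator `𝒱_{n,θ}^{α-s,β-s} f`. -/
def VS (η : ℝ → ℝ) (α β : ℝ) (s : ℕ) (θ : ℝ) (n : ℕ) (f : ℝ → ℝ) (x : ℝ) : ℝ :=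
  (∑ k ∈ Finset.range s, iteratedDeriv k f θ * (x - θ) ^ k / k.factorial) +
    ∫ t in θ..x, (x - t) ^ (s - 1) / (s - 1).factorial *
      V η α β n (iteratedDeriv s f) t

/-- `A_j^{α,β} = (α+β+2)_{2j}/(α+1)_j`. -/
def Acoef (α β : ℝ) (j : ℕ) : ℝ := poch (α + β + 2) (2 * j) / poch (α + 1) j

/-- `B_n^{α,β} = (α+1)_{n+1}/(α+β+2)_{2n+1}`. -/
def Bcoef (α β : ℝ) (n : ℕ) : ℝ := poch (α + 1) (n + 1) / poch (α + β + 2) (2 * n + 1)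

/-- `D_j^{α,β} = (j+β+1)/((2j+α+β+2)(2j+α+β+3))`. -/
def Dcoef (α β : ℝ) (j : ℕ) : ℝ :=
  ((j : ℝ) + β + 1) / ((2 * (j : ℝ) + α + β + 2) * (2 * (j : ℝ) + α + β + 3))

/-- The function `u_{g,k}` of the Aubin–Nitsche duality argument. -/
def u (α β : ℝ) (s k : ℕ) (g : ℝ → ℝ) (x : ℝ) : ℝ :=
  ∫ t in (-1 : ℝ)..x, (x - t) ^ (s - 1) / (s - 1).factorial * (1 / w α β t) *
    ∫ y in t..(1 : ℝ), (y - t) ^ (s - k - 1) / (s - k - 1).factorial * g y * w α β y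

/-- The `s`-th derivative of `u_{g,k}`, given by its explicit formula. -/
def uDs (α β : ℝ) (s k : ℕ) (g : ℝ → ℝ) (x : ℝ) : ℝ :=
  (1 / w α β x) *
    ∫ y in x..(1 : ℝ), (y - x) ^ (s - k - 1) / (s - k - 1).factorial * g y * w α β y

/-!
Up to sign, `u` is the `s`-fold primitive from `-1` of `ψ * G`, where `ψ = 1 / w` and `G` is the
`(s - k)`-fold primitive of `g * w` from `1`. Its derivative of order `2 * s - k` is therefore
`(ψ * G)^(s - k)`, in whose Leibniz expansion the term with no derivative on `ψ` is `± g` almost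
everywhere. In every other term the powers of `1 - x` gained from the remaining primitives of `G`
cancel those lost by differentiating `ψ` at `1`, which leaves a multiple of
`(1 - x) ^ (-α - 1) * (1 + x) ^ d * ∫_x^1 |g| w`. The loss `d` at `-1` is `0` if `β = 0` and
`-β - 1` if `ψ` is differentiated only once. By Hölder's inequality, and since `φ ^ (s - k) ≤ φ`,
these terms contribute at most `‖g‖` times `R = (1 - x) ^ (1/2 - (α + 1)/q) * (1 + x) ^ (1/2 + d)`,
and the condition on `β` gives `R` a finite norm.
-/

section RepeatedIntegral

open Filter Topology

theorem iteratedDeriv_iteratedDeriv {𝕜 F : Type*} [NontriviallyNormedField 𝕜]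
    [NormedAddCommGroup F] [NormedSpace 𝕜 F] (i j : ℕ) (f : 𝕜 → F) :
    iteratedDeriv i (iteratedDeriv j f) = iteratedDeriv (i + j) f := by
  simp only [iteratedDeriv_eq_iterate, Function.iterate_add_apply]

/-- The `(n + 1)`-fold iterated primitive `∫_a^x (x-t)ⁿ/n! f(t) dt` of `f` from the base point `a`.
The base point may lie on either side of `x`, so that `u` and the integral over `[t, 1]` inside it
are both of this form. -/
def repeatedIntegral (a : ℝ) (n : ℕ) (f : ℝ → ℝ) (x : ℝ) : ℝ :=
  ∫ t in a..x, (x - t) ^ n / n.factorial * f t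

variable {a x : ℝ} {n : ℕ} {f : ℝ → ℝ}

theorem repeatedIntegral_zero (a : ℝ) (f : ℝ → ℝ) :
    repeatedIntegral a 0 f = fun x => ∫ t in a..x, f t := by
  funext x
  simp [repeatedIntegral]

theorem hasDerivAt_sub_pow_div_factorial (n : ℕ) (x t : ℝ) :
    HasDerivAt (fun t => (x - t) ^ (n + 1) / (n + 1).factorial) (-((x - t) ^ n / n.factorial))
      t := by
  refine ((((hasDerivAt_id t).const_sub x).pow (n + 1)).div_const _).congr_deriv ?_
  rw [Nat.factorial_succ, Nat.add_sub_cancel, id]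
  push_cast
  field_simp

theorem repeatedIntegral_succ (hf : IntervalIntegrable f volume a x) :
    repeatedIntegral a (n + 1) f x = repeatedIntegral a n (repeatedIntegral a 0 f) x := by
  have hF := hf.absolutelyContinuousOnInterval_intervalIntegral left_mem_uIcc
  have hkernel : AbsolutelyContinuousOnInterval
      (fun t => (x - t) ^ (n + 1) / ((n + 1).factorial : ℝ)) a x :=
    ContDiffOn.absolutelyContinuousOnInterval (by fun_prop)
  calc repeatedIntegral a (n + 1) f x
      = ∫ t in a..x, (x - t) ^ (n + 1) / ((n + 1).factorial : ℝ) *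
          deriv (fun y => ∫ t in a..y, f t) t := by
        refine intervalIntegral.integral_congr_ae ?_
        filter_upwards [hf.ae_hasDerivAt_integral] with t ht hmem
        rw [(ht (uIoc_subset_uIcc hmem) a left_mem_uIcc).deriv]
    _ = repeatedIntegral a n (repeatedIntegral a 0 f) x := by
        rw [hkernel.integral_mul_deriv_eq_deriv_mul hF, repeatedIntegral_zero]
        simp [(hasDerivAt_sub_pow_div_factorial n x _).deriv, repeatedIntegral]

theorem intervalIntegrable_repeatedIntegral_zero (hf : IntervalIntegrable f volume a x) :
    IntervalIntegrable (repeatedIntegral a 0 f) volume a x := by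
  rw [repeatedIntegral_zero]
  exact (intervalIntegral.continuousOn_primitive_interval' hf left_mem_uIcc).intervalIntegrable

theorem continuousAt_repeatedIntegral_zero (hf : ∀ᶠ y in 𝓝 x, IntervalIntegrable f volume a y) :
    ContinuousAt (repeatedIntegral a 0 f) x := by
  obtain ⟨ε, hε, hball⟩ := Metric.eventually_nhds_iff_ball.1 hf
  have hlo : x - ε / 2 ∈ Metric.ball x ε := by
    rw [Real.ball_eq_Ioo]; constructor <;> linarith
  have hhi : x + ε / 2 ∈ Metric.ball x ε := by
    rw [Real.ball_eq_Ioo]; constructor <;> linarith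
  have hint : IntervalIntegrable f volume (x - ε / 2) (x + ε / 2) :=
    (hball _ hlo).symm.trans (hball _ hhi)
  have hnhds : uIcc (x - ε / 2) (x + ε / 2) ∈ 𝓝 x := by
    rw [uIcc_of_le (by linarith)]
    exact Icc_mem_nhds (by linarith) (by linarith)
  have hprim := (intervalIntegral.continuousOn_primitive_interval' hint left_mem_uIcc).continuousAt
    hnhds
  refine (hprim.const_add (∫ t in a..(x - ε / 2), f t)).congr ?_
  filter_upwards [hf] with y hy
  rw [repeatedIntegral_zero, intervalIntegral.integral_add_adjacent_intervals (hball _ hlo)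
    ((hball _ hlo).symm.trans hy)]

theorem hasDerivAt_repeatedIntegral_zero (hf : IntervalIntegrable f volume a x)
    (hfc : ∀ᶠ y in 𝓝 x, ContinuousAt f y) : HasDerivAt (repeatedIntegral a 0 f) (f x) x := by
  rw [repeatedIntegral_zero]
  obtain ⟨s, hs, ho, hxs⟩ := eventually_nhds_iff.1 hfc
  exact intervalIntegral.integral_hasDerivAt_right hf
    (ContinuousAt.stronglyMeasurableAtFilter ho hs x hxs) hfc.self_of_nhds

theorem hasDerivAt_repeatedIntegral_succ (n : ℕ)
    (hf : ∀ᶠ y in 𝓝 x, IntervalIntegrable f volume a y) :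
    HasDerivAt (repeatedIntegral a (n + 1) f) (repeatedIntegral a n f x) x := by
  induction n generalizing f with
  | zero =>
    refine (hasDerivAt_repeatedIntegral_zero
      (intervalIntegrable_repeatedIntegral_zero hf.self_of_nhds) ?_).congr_of_eventuallyEq
      (hf.mono fun y hy => repeatedIntegral_succ hy)
    exact hf.eventually_nhds.mono fun y hy => continuousAt_repeatedIntegral_zero hy
  | succ n ih =>
    rw [repeatedIntegral_succ hf.self_of_nhds]
    refine (ih ?_).congr_of_eventuallyEq (hf.mono fun y hy => repeatedIntegral_succ hy)
    exact hf.mono fun y hy => intervalIntegrable_repeatedIntegral_zero hy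

theorem iteratedDeriv_repeatedIntegral_add (i : ℕ)
    (hf : ∀ᶠ y in 𝓝 x, IntervalIntegrable f volume a y) :
    iteratedDeriv i (repeatedIntegral a (n + i) f) =ᶠ[𝓝 x] repeatedIntegral a n f := by
  induction i with
  | zero => simp
  | succ i ih =>
    have hderiv :
        deriv (repeatedIntegral a (n + i + 1) f) =ᶠ[𝓝 x] repeatedIntegral a (n + i) f :=
      hf.eventually_nhds.mono fun y hy => (hasDerivAt_repeatedIntegral_succ _ hy).deriv
    rw [iteratedDeriv_succ', ← add_assoc]
    exact (hderiv.iteratedDeriv i).trans ih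

theorem iteratedDeriv_succ_repeatedIntegral (hf : ∀ᶠ y in 𝓝 x, IntervalIntegrable f volume a y)
    (hfc : ∀ᶠ y in 𝓝 x, ContinuousAt f y) :
    iteratedDeriv (n + 1) (repeatedIntegral a n f) =ᶠ[𝓝 x] f := by
  have hderiv : deriv (iteratedDeriv n (repeatedIntegral a (0 + n) f)) =ᶠ[𝓝 x]
      deriv (repeatedIntegral a 0 f) := (iteratedDeriv_repeatedIntegral_add n hf).deriv
  rw [zero_add, ← iteratedDeriv_succ] at hderiv
  refine hderiv.trans ?_
  filter_upwards [hf, hfc.eventually_nhds] with y hy hyc using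
    (hasDerivAt_repeatedIntegral_zero hy hyc).deriv

theorem contDiffAt_repeatedIntegral (n : ℕ)
    (hf : ∀ᶠ y in 𝓝 x, IntervalIntegrable f volume a y) :
    ContDiffAt ℝ n (repeatedIntegral a n f) x := by
  obtain ⟨s, hs, ho, hxs⟩ := eventually_nhds_iff.1 hf
  have hint : ∀ y ∈ s, ∀ᶠ z in 𝓝 y, IntervalIntegrable f volume a z := fun y hy =>
    eventually_of_mem (ho.mem_nhds hy) hs
  suffices ContDiffOn ℝ n (repeatedIntegral a n f) s from this.contDiffAt (ho.mem_nhds hxs)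
  clear hxs
  induction n with
  | zero =>
    exact contDiffOn_zero.2 fun y hy =>
      (continuousAt_repeatedIntegral_zero (hint y hy)).continuousWithinAt
  | succ n ih =>
    have hderiv : ∀ y ∈ s,
        HasDerivAt (repeatedIntegral a (n + 1) f) (repeatedIntegral a n f y) y :=
      fun y hy => hasDerivAt_repeatedIntegral_succ n (hint y hy)
    rw [Nat.cast_succ, contDiffOn_succ_iff_deriv_of_isOpen ho]
    exact ⟨fun y hy => (hderiv y hy).differentiableAt.differentiableWithinAt, by simp,
      ih.congr fun y hy => (hderiv y hy).deriv⟩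

theorem abs_repeatedIntegral_le (a : ℝ) (n : ℕ) (hf : IntervalIntegrable f volume a x) :
    |repeatedIntegral a n f x| ≤ |x - a| ^ n * |∫ t in a..x, ‖f t‖| := by
  have hfact : (1 : ℝ) ≤ n.factorial := by exact_mod_cast n.factorial_pos
  have hkernel : ∀ t ∈ uIoc a x, ‖(x - t) ^ n / n.factorial * f t‖ ≤ |x - a| ^ n * ‖f t‖ := by
    intro t ht
    have hxt : |x - t| ≤ |x - a| := abs_sub_right_of_mem_uIcc (uIoc_subset_uIcc ht)
    rw [norm_mul, norm_div, norm_pow, Real.norm_natCast, Real.norm_eq_abs]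
    gcongr
    exact (div_le_self (by positivity) hfact).trans (by gcongr)
  calc |repeatedIntegral a n f x|
      ≤ |∫ t in a..x, |x - a| ^ n * ‖f t‖| :=
        intervalIntegral.norm_integral_le_abs_of_norm_le
          (ae_restrict_of_forall_mem measurableSet_uIoc hkernel) (hf.norm.const_mul _)
    _ = |x - a| ^ n * |∫ t in a..x, ‖f t‖| := by
        rw [intervalIntegral.integral_const_mul, abs_mul, abs_of_nonneg (by positivity)]

theorem intervalIntegrable_of_sub_pow_mul {y : ℝ} (hay : a ≤ y) (hyx : y < x)
    (h : IntervalIntegrable (fun t => (x - t) ^ n / n.factorial * f t) volume a x) :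
    IntervalIntegrable f volume a y := by
  have hpos : ∀ t ∈ uIcc a y, 0 < (x - t) ^ n / (n.factorial : ℝ) := by
    intro t ht
    rw [uIcc_of_le hay] at ht
    have : 0 < x - t := by linarith [ht.2]
    positivity
  have hcont : ContinuousOn (fun t => ((x - t) ^ n / (n.factorial : ℝ))⁻¹) (uIcc a y) :=
    ContinuousOn.inv₀ (by fun_prop) fun t ht => (hpos t ht).ne'
  have hle : uIcc a y ⊆ uIcc a x := by
    rw [uIcc_of_le hay, uIcc_of_le (hay.trans hyx.le)]
    exact Icc_subset_Icc_right hyx.le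
  refine ((h.mono_set hle).continuousOn_mul hcont).congr fun t ht => ?_
  exact inv_mul_cancel_left₀ (hpos t (uIoc_subset_uIcc ht)).ne' _

theorem abs_iteratedDeriv_repeatedIntegral_le {b : ℝ} (i n : ℕ) (hf : ContinuousOn f (Ioo a b))
    (hx : x ∈ Ioo a b) :
    |iteratedDeriv (i + (n + 1)) (repeatedIntegral a n f) x| ≤ |iteratedDeriv i f x| := by
  rw [← iteratedDeriv_iteratedDeriv]
  by_cases hint : ∀ y ∈ Ioo a b, IntervalIntegrable f volume a y
  · exact (congrArg abs ((iteratedDeriv_succ_repeatedIntegral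
      (eventually_of_mem (Ioo_mem_nhds hx.1 hx.2) hint)
      (eventually_of_mem (Ioo_mem_nhds hx.1 hx.2) fun y hy =>
        hf.continuousAt (Ioo_mem_nhds hy.1 hy.2))).iteratedDeriv_eq i)).le
  · -- Otherwise `f` is not integrable near `a`, and the integral takes the junk value `0`.
    have hzero : repeatedIntegral a n f =ᶠ[𝓝 x] fun _ => 0 := by
      filter_upwards [Ioo_mem_nhds hx.1 hx.2] with y hy
      refine intervalIntegral.integral_undef fun hker => hint fun z hz => ?_
      obtain ⟨c, hac, hcy⟩ := exists_between hy.1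
      refine (intervalIntegrable_of_sub_pow_mul hac.le hcy hker).trans
        (hf.mono ?_).intervalIntegrable
      exact ordConnected_Ioo.uIcc_subset ⟨hac, hcy.trans hy.2⟩ hz
    rw [iteratedDeriv_iteratedDeriv, hzero.iteratedDeriv_eq]
    simp

end RepeatedIntegral

section Leibniz

open Filter Topology Finset

theorem differentiableAt_iteratedDeriv {𝕜 F : Type*} [NontriviallyNormedField 𝕜]
    [NormedAddCommGroup F] [NormedSpace 𝕜 F] {f : 𝕜 → F} {x : 𝕜} {n : WithTop ℕ∞} {i : ℕ}
    (hf : ContDiffAt 𝕜 n f x) (hi : i < n) : DifferentiableAt 𝕜 (iteratedDeriv i f) x := by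
  rw [iteratedDeriv_eq_equiv_comp]
  exact (LinearIsometryEquiv.differentiable _).differentiableAt.comp x
    (hf.differentiableAt_iteratedFDeriv hi)

section NormedField

variable {𝕜 : Type*} [NontriviallyNormedField 𝕜] {ψ G : 𝕜 → 𝕜} {x : 𝕜}

theorem differentiableAt_fun_mul_iff (hψ : DifferentiableAt 𝕜 ψ x) (hψx : ψ x ≠ 0) :
    DifferentiableAt 𝕜 (fun y => ψ y * G y) x ↔ DifferentiableAt 𝕜 G x := by
  refine ⟨fun h => ((hψ.inv hψx).mul h).congr_of_eventuallyEq ?_, hψ.mul⟩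
  filter_upwards [hψ.continuousAt.eventually_ne hψx] with y hy
  simp [hy]

theorem norm_iteratedDeriv_succ_mul_le {m : ℕ} (hψ : ContDiffAt 𝕜 (m + 1) ψ x) (hψx : ψ x ≠ 0)
    (hG : ContDiffAt 𝕜 m G x) :
    ‖iteratedDeriv (m + 1) (ψ * G) x‖ ≤ ∑ i ∈ range (m + 1), (m.choose i : ℝ) *
      (‖iteratedDeriv (i + 1) ψ x‖ * ‖iteratedDeriv (m - i) G x‖ +
        ‖iteratedDeriv i ψ x‖ * ‖iteratedDeriv (m - i + 1) G x‖) := by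
  have hψm : ContDiffAt 𝕜 m ψ x := hψ.of_le (by exact_mod_cast m.le_succ)
  have hdψ : ∀ i ∈ range (m + 1), DifferentiableAt 𝕜 (iteratedDeriv i ψ) x := fun i hi =>
    differentiableAt_iteratedDeriv hψ (by exact_mod_cast mem_range.1 hi)
  have hleibniz : iteratedDeriv m (ψ * G) =ᶠ[𝓝 x] fun y => ∑ i ∈ range (m + 1),
      m.choose i * iteratedDeriv i ψ y * iteratedDeriv (m - i) G y := by
    filter_upwards [hψm.eventually (by simp), hG.eventually (by simp)] with y hψy hGy using
      iteratedDeriv_mul hψy hGy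
  rw [iteratedDeriv_succ, hleibniz.deriv_eq]
  have hdterm : ∀ i ∈ range (m + 1), DifferentiableAt 𝕜 (iteratedDeriv (m - i) G) x →
      DifferentiableAt 𝕜
        (fun y => m.choose i * iteratedDeriv i ψ y * iteratedDeriv (m - i) G y) x :=
    fun i hi hG => ((hdψ i hi).const_mul _).fun_mul hG
  have hdG : ∀ i < m, DifferentiableAt 𝕜 (iteratedDeriv (m - (i + 1)) G) x := fun i hi =>
    differentiableAt_iteratedDeriv hG (by norm_cast; omega)
  by_cases hGm : DifferentiableAt 𝕜 (iteratedDeriv m G) x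
  · have hdG' : ∀ i ∈ range (m + 1), DifferentiableAt 𝕜 (iteratedDeriv (m - i) G) x
      | 0, _ => hGm
      | i + 1, hi => hdG i (by simpa using hi)
    rw [deriv_fun_sum fun i hi => hdterm i hi (hdG' i hi)]
    refine norm_sum_le_of_le _ fun i hi => ?_
    rw [deriv_fun_mul ((hdψ i hi).const_mul _) (hdG' i hi), deriv_const_mul _ (hdψ i hi),
      ← iteratedDeriv_succ, ← iteratedDeriv_succ, mul_assoc, mul_assoc, ← mul_add, norm_mul]
    gcongr
    · simpa using Nat.norm_cast_le (α := 𝕜) (m.choose i)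
    · exact norm_add_le_of_le (norm_mul_le _ _) (norm_mul_le _ _)
  · rw [deriv_zero_of_not_differentiableAt, norm_zero]
    · positivity
    · intro hsum
      simp only [sum_range_succ' _ m] at hsum
      have htail := DifferentiableAt.fun_sum fun i hi =>
        hdterm (i + 1) (by simpa using hi) (hdG i (mem_range.1 hi))
      refine hGm ((differentiableAt_fun_mul_iff (hdψ 0 (by simp)) hψx).1 ?_)
      simpa using (htail.fun_add_iff_right).1 hsum

end NormedField

theorem abs_deriv_le_of_abs_sub_le {F H : ℝ → ℝ} {h x : ℝ} (hH : HasDerivAt H h x)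
    (hFH : ∀ᶠ y in 𝓝 x, |F y - F x| ≤ |H y - H x|) : |deriv F x| ≤ |h| := by
  by_cases hF : DifferentiableAt ℝ F x
  · refine le_of_tendsto_of_tendsto (hasDerivAt_iff_tendsto_slope.1 hF.hasDerivAt).abs
      (hasDerivAt_iff_tendsto_slope.1 hH).abs ?_
    filter_upwards [hFH.filter_mono nhdsWithin_le_nhds] with y hy
    rw [slope_def_field, slope_def_field, abs_div, abs_div]
    gcongr
  · rw [deriv_zero_of_not_differentiableAt hF, abs_zero]
    exact abs_nonneg h

theorem abs_deriv_repeatedIntegral_zero_le {a x : ℝ} {f h : ℝ → ℝ}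
    (hf : ∀ᶠ y in 𝓝 x, IntervalIntegrable f volume a y) (hh : ∀ᶠ y in 𝓝 x, ContinuousAt h y)
    (hfh : ∀ᶠ y in 𝓝 x, |f y| ≤ h y) : |deriv (repeatedIntegral a 0 f) x| ≤ h x := by
  rw [← abs_of_nonneg ((abs_nonneg _).trans hfh.self_of_nhds)]
  refine abs_deriv_le_of_abs_sub_le
    (hasDerivAt_repeatedIntegral_zero (a := x) IntervalIntegrable.refl hh) ?_
  obtain ⟨ε, hε, hball⟩ := Metric.eventually_nhds_iff_ball.1 (hf.and (hh.and hfh))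
  filter_upwards [Metric.ball_mem_nhds x hε] with y hy
  have hx := Metric.mem_ball_self (x := x) hε
  have hsub : uIcc x y ⊆ Metric.ball x ε := (convex_ball x ε).ordConnected.uIcc_subset hx hy
  simp only [repeatedIntegral_zero, intervalIntegral.integral_same, sub_zero]
  rw [intervalIntegral.integral_interval_sub_left (hball y hy).1 (hball x hx).1]
  exact intervalIntegral.norm_integral_le_abs_of_norm_le (E := ℝ)
    (ae_restrict_of_forall_mem measurableSet_uIoc fun t ht =>
      (hball t (hsub (uIoc_subset_uIcc ht))).2.2)
    (ContinuousOn.intervalIntegrable fun t ht =>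
      (hball t (hsub ht)).2.1.continuousWithinAt)

theorem abs_iteratedDeriv_mul_repeatedIntegral_le {a x κ : ℝ} {m : ℕ} {ψ f : ℝ → ℝ}
    (hψ : ContDiffAt ℝ (m + 1) ψ x) (hψx : ψ x ≠ 0)
    (hf : ∀ᶠ y in 𝓝 x, IntervalIntegrable f volume a y)
    (hκ : ∀ i ≤ m, |iteratedDeriv (i + 1) ψ x| * |x - a| ^ i ≤ κ) :
    |iteratedDeriv (m + 1) (ψ * repeatedIntegral a m f) x| ≤
      2 ^ m * (|ψ x| * |deriv (repeatedIntegral a 0 f) x| + 2 * κ * |∫ t in a..x, ‖f t‖|) := by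
  set G := repeatedIntegral a m f
  set I := |∫ t in a..x, ‖f t‖|
  have hderiv : ∀ i ≤ m, iteratedDeriv (m - i) G =ᶠ[𝓝 x] repeatedIntegral a i f := fun i hi => by
    simpa [G, Nat.add_sub_cancel' hi] using iteratedDeriv_repeatedIntegral_add (n := i) (m - i) hf
  have hlower : ∀ i ≤ m, |iteratedDeriv (i + 1) ψ x| * |iteratedDeriv (m - i) G x| ≤ κ * I := by
    intro i hi
    rw [(hderiv i hi).self_of_nhds]
    calc |iteratedDeriv (i + 1) ψ x| * |repeatedIntegral a i f x|
        ≤ |iteratedDeriv (i + 1) ψ x| * (|x - a| ^ i * I) := by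
          gcongr
          exact abs_repeatedIntegral_le a i hf.self_of_nhds
      _ = |iteratedDeriv (i + 1) ψ x| * |x - a| ^ i * I := by ring
      _ ≤ κ * I := by gcongr; exact hκ i hi
  have htop : ∀ i ≤ m, |iteratedDeriv i ψ x| * |iteratedDeriv (m - i + 1) G x| ≤
      |ψ x| * |deriv (repeatedIntegral a 0 f) x| + κ * I
    | 0, hi => by
      rw [iteratedDeriv_succ, (hderiv 0 hi).deriv_eq, iteratedDeriv_zero, le_add_iff_nonneg_right]
      exact (by positivity : (0 : ℝ) ≤ _).trans (hlower 0 hi)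
    | i + 1, hi => by
      rw [show m - (i + 1) + 1 = m - i by omega]
      exact (hlower i (by omega)).trans (le_add_of_nonneg_left (by positivity))
  calc |iteratedDeriv (m + 1) (ψ * G) x|
      ≤ ∑ i ∈ range (m + 1), (m.choose i : ℝ) * (|iteratedDeriv (i + 1) ψ x| *
          |iteratedDeriv (m - i) G x| + |iteratedDeriv i ψ x| * |iteratedDeriv (m - i + 1) G x|) :=
        norm_iteratedDeriv_succ_mul_le hψ hψx (contDiffAt_repeatedIntegral m hf)
    _ ≤ ∑ i ∈ range (m + 1), (m.choose i : ℝ) *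
          (|ψ x| * |deriv (repeatedIntegral a 0 f) x| + 2 * κ * I) := by
        refine sum_le_sum fun i hi => ?_
        have hi : i ≤ m := by simpa [Nat.lt_succ_iff] using hi
        exact mul_le_mul_of_nonneg_left (by linarith [hlower i hi, htop i hi]) (by positivity)
    _ = 2 ^ m * (|ψ x| * |deriv (repeatedIntegral a 0 f) x| + 2 * κ * I) := by
        rw [← sum_mul, ← Nat.cast_sum, Nat.sum_range_choose, Nat.cast_pow, Nat.cast_ofNat]

end Leibniz

section JacobiWeight

open Filter Topology

variable {a b c d x : ℝ}

theorem w_nonneg (hx : x ∈ Icc (-1) 1) : 0 ≤ w a b x :=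
  mul_nonneg (Real.rpow_nonneg (by linarith [hx.2]) _) (Real.rpow_nonneg (by linarith [hx.1]) _)

theorem w_pos (hx : x ∈ Ioo (-1) 1) : 0 < w a b x :=
  mul_pos (Real.rpow_pos_of_pos (by linarith [hx.2]) _)
    (Real.rpow_pos_of_pos (by linarith [hx.1]) _)

theorem w_le_of_nonneg (ha : 0 ≤ a) (hb : 0 ≤ b) (hx : x ∈ Icc (-1) 1) :
    w a b x ≤ 2 ^ a * 2 ^ b := by
  have hleft : 0 ≤ 1 - x := by linarith [hx.2]
  have hright : 0 ≤ 1 + x := by linarith [hx.1]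
  rw [w]
  gcongr <;> linarith [hx.1, hx.2]

theorem measurable_w (a b : ℝ) : Measurable (w a b) := by
  unfold w
  fun_prop

theorem w_mul_w (hx : x ∈ Ioo (-1) 1) : w a b x * w c d x = w (a + c) (b + d) x := by
  rw [w, w, w, Real.rpow_add (by linarith [hx.2]), Real.rpow_add (by linarith [hx.1])]
  ring

theorem w_rpow (hx : x ∈ Ioo (-1) 1) (r : ℝ) : w a b x ^ r = w (a * r) (b * r) x := by
  have h₁ : 0 < 1 - x := by linarith [hx.2]
  have h₂ : 0 < 1 + x := by linarith [hx.1]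
  rw [w, w, Real.mul_rpow (by positivity) (by positivity), Real.rpow_mul h₁.le,
    Real.rpow_mul h₂.le]

theorem one_div_w (hx : x ∈ Ioo (-1) 1) : 1 / w a b x = w (-a) (-b) x := by
  rw [w, w, Real.rpow_neg (by linarith [hx.2]), Real.rpow_neg (by linarith [hx.1]), one_div,
    mul_inv]

theorem w_zero_right (a : ℝ) : w a 0 = fun x => (1 - x) ^ a := by
  funext x
  rw [w, Real.rpow_zero, mul_one]

theorem sqrt_one_sub_sq_eq_w (hx : x ∈ Ioo (-1) 1) : √(1 - x ^ 2) = w (1 / 2) (1 / 2) x := by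
  rw [w, ← Real.mul_rpow (by linarith [hx.2]) (by linarith [hx.1]), Real.sqrt_eq_rpow]
  ring_nf

theorem contDiffAt_w {n : WithTop ℕ∞} (hx : x ∈ Ioo (-1) 1) : ContDiffAt ℝ n (w a b) x :=
  ((contDiffAt_const.sub contDiffAt_id).rpow_const_of_ne (sub_pos.2 hx.2).ne').mul
    ((contDiffAt_const.add contDiffAt_id).rpow_const_of_ne (neg_lt_iff_pos_add'.1 hx.1).ne')

theorem hasDerivAt_w (hx : x ∈ Ioo (-1) 1) :
    HasDerivAt (w a b) (-a * w (a - 1) b x + b * w a (b - 1) x) x := by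
  have h₁ : 1 - x ≠ 0 := by linarith [hx.2]
  have h₂ : 1 + x ≠ 0 := by linarith [hx.1]
  refine ((((hasDerivAt_id x).const_sub 1).rpow_const (Or.inl h₁)).mul
    (((hasDerivAt_id x).const_add 1).rpow_const (Or.inl h₂))).congr_deriv ?_
  simp only [w, id]
  ring

theorem iteratedDeriv_w_zero_right (a : ℝ) (i : ℕ) (x : ℝ) :
    iteratedDeriv i (w a 0) x = (-1) ^ i * ((descPochhammer ℝ i).eval a * w (a - i) 0 x) := by
  simp only [w_zero_right, iteratedDeriv_comp_const_sub i (fun y : ℝ => y ^ a) 1,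
    iteratedDeriv_eq_iterate, Real.iter_deriv_rpow_const, smul_eq_mul]

/-- The first `m + 1` derivatives of `w_{a,b}` are at most of the size expected at the endpoint `1`,
where each one costs a factor `1 - x`, and grow no faster than `(1 + x) ^ d` at `-1`, whatever their
order. The loss at `-1` is kept as a parameter because it vanishes for `b = 0`. -/
def WeightDerivBound (a b d : ℝ) (m : ℕ) : Prop :=
  ∃ K, 0 ≤ K ∧ ∀ i ≤ m, ∀ x ∈ Ioo (-1 : ℝ) 1,
    |iteratedDeriv (i + 1) (w a b) x| * |x - 1| ^ i ≤ K * w (a - 1) d x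

theorem weightDerivBound_zero_right (a : ℝ) (m : ℕ) : WeightDerivBound a 0 0 m := by
  refine ⟨∑ i ∈ Finset.range (m + 1), |(descPochhammer ℝ (i + 1)).eval a|, by positivity,
    fun i hi x hx => ?_⟩
  have hx₁ : 0 < 1 - x := by linarith [hx.2]
  have hpow : w (a - (i + 1 : ℕ)) 0 x * (1 - x) ^ i = w (a - 1) 0 x := by
    rw [w_zero_right, w_zero_right, ← Real.rpow_natCast, ← Real.rpow_add hx₁]
    push_cast
    ring_nf
  calc |iteratedDeriv (i + 1) (w a 0) x| * |x - 1| ^ i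
      = |(descPochhammer ℝ (i + 1)).eval a| * w (a - 1) 0 x := by
        rw [iteratedDeriv_w_zero_right, abs_mul, abs_mul, abs_pow, abs_neg, abs_one, one_pow,
          one_mul, abs_of_pos (w_pos hx), mul_assoc, abs_sub_comm, abs_of_pos hx₁, hpow]
    _ ≤ (∑ i ∈ Finset.range (m + 1), |(descPochhammer ℝ (i + 1)).eval a|) * w (a - 1) 0 x :=
        mul_le_mul_of_nonneg_right (Finset.single_le_sum
          (f := fun i => |(descPochhammer ℝ (i + 1)).eval a|) (fun _ _ => abs_nonneg _)
          (Finset.mem_range.2 (by omega))) (w_pos hx).le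

theorem abs_deriv_w_le (a b : ℝ) (hx : x ∈ Ioo (-1) 1) :
    |deriv (w a b) x| ≤ 2 * (|a| + |b|) * w (a - 1) (b - 1) x := by
  have hw : 0 < w (a - 1) (b - 1) x := w_pos hx
  have hleft : w (a - 1) b x = (1 + x) * w (a - 1) (b - 1) x := by
    have h := w_mul_w (a := 0) (b := 1) (c := a - 1) (d := b - 1) hx
    simpa [w] using h.symm
  have hright : w a (b - 1) x = (1 - x) * w (a - 1) (b - 1) x := by
    have h := w_mul_w (a := 1) (b := 0) (c := a - 1) (d := b - 1) hx
    simpa [w] using h.symm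
  calc |deriv (w a b) x|
      = |(-a * (1 + x) + b * (1 - x)) * w (a - 1) (b - 1) x| := by
        rw [(hasDerivAt_w hx).deriv, hleft, hright]
        ring_nf
    _ = |-a * (1 + x) + b * (1 - x)| * w (a - 1) (b - 1) x := by rw [abs_mul, abs_of_pos hw]
    _ ≤ (|a| * 2 + |b| * 2) * w (a - 1) (b - 1) x := by
        gcongr
        refine (abs_add_le _ _).trans ?_
        rw [abs_mul, abs_mul, abs_neg, abs_of_pos (by linarith [hx.1] : 0 < 1 + x),
          abs_of_pos (by linarith [hx.2] : 0 < 1 - x)]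
        gcongr <;> linarith [hx.1, hx.2]
    _ = 2 * (|a| + |b|) * w (a - 1) (b - 1) x := by ring

theorem weightDerivBound_zero (a b : ℝ) : WeightDerivBound a b (b - 1) 0 := by
  refine ⟨2 * (|a| + |b|), by positivity, fun i hi x hx => ?_⟩
  obtain rfl : i = 0 := by omega
  simpa using abs_deriv_w_le a b hx

end JacobiWeight

section LpNorm

variable {X E : Type*} [MeasurableSpace X] [NormedAddCommGroup E]
  {μ : Measure X} {f : X → E} {p : ℝ≥0∞}

theorem lpNorm_mono_ae_real {g : X → ℝ} (hg : MemLp g p μ) (h : ∀ᵐ x ∂μ, ‖f x‖ ≤ g x) :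
    lpNorm f p μ ≤ lpNorm g p μ := by
  by_cases hf : AEStronglyMeasurable f μ
  · rw [← toReal_eLpNorm hf, ← toReal_eLpNorm hg.1]
    exact ENNReal.toReal_mono hg.2.ne (eLpNorm_mono_ae_real h)
  · rw [lpNorm_of_not_aestronglyMeasurable hf]
    exact lpNorm_nonneg

theorem one_sub_one_div_toReal_nonneg (hp : 1 ≤ p) : 0 ≤ 1 - 1 / p.toReal := by
  rcases eq_or_ne p ⊤ with rfl | hp'
  · simp
  · rw [sub_nonneg]
    exact div_le_one_of_le₀ (by simpa using ENNReal.toReal_mono hp' hp) toReal_nonneg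

theorem setIntegral_norm_le_lpNorm_mul_rpow [IsFiniteMeasure μ] (hp : 1 ≤ p) (hf : MemLp f p μ)
    (s : Set X) :
    ∫ x in s, ‖f x‖ ∂μ ≤ lpNorm f p μ * μ.real s ^ (1 - 1 / p.toReal) := by
  have holder := eLpNorm_le_eLpNorm_mul_rpow_measure_univ hp (hf.1.restrict (s := s))
  rw [ENNReal.toReal_one, div_one, Measure.restrict_apply_univ] at holder
  rw [← lpNorm_one_eq_integral_norm hf.1.restrict, ← toReal_eLpNorm hf.1.restrict,
    ← toReal_eLpNorm hf.1, Measure.real, ENNReal.toReal_rpow, ← ENNReal.toReal_mul]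
  refine ENNReal.toReal_mono ?_ (holder.trans (by gcongr; exact Measure.restrict_le_self))
  exact ENNReal.mul_ne_top hf.2.ne (ENNReal.rpow_ne_top_of_nonneg
    (one_sub_one_div_toReal_nonneg hp) (measure_ne_top μ s))

end LpNorm

section JacobiMeasure

variable {a b : ℝ}

theorem intervalIntegrable_w (ha : -1 < a) (hb : -1 < b) :
    IntervalIntegrable (w a b) volume (-1) 1 := by
  have hleft : IntervalIntegrable (w a b) volume (-1) 0 := by
    have h : IntervalIntegrable (fun x : ℝ => (1 + x) ^ b) volume (-1) 0 := by
      simpa using (intervalIntegral.intervalIntegrable_rpow' (a := 0) (b := 1) hb).comp_add_left 1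
    refine h.continuousOn_mul (ContinuousOn.rpow_const (by fun_prop) fun x hx => Or.inl ?_)
    rw [uIcc_of_le (by norm_num)] at hx
    linarith [hx.2]
  have hright : IntervalIntegrable (w a b) volume 0 1 := by
    have h : IntervalIntegrable (fun x : ℝ => (1 - x) ^ a) volume 0 1 := by
      simpa using (intervalIntegral.intervalIntegrable_rpow' (a := 1) (b := 0) ha).comp_sub_left 1
    refine h.mul_continuousOn (ContinuousOn.rpow_const (by fun_prop) fun x hx => Or.inl ?_)
    rw [uIcc_of_le (by norm_num)] at hx
    linarith [hx.1]
  exact hleft.trans hright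

/-- The measure `w_{a,b}(x) dx` on `(-1, 1)`, so that `LpW a b q` is its `L^q` norm for `q < ∞`. -/
def jacobiMeasure (a b : ℝ) : Measure ℝ :=
  (volume.restrict (Ioo (-1) 1)).withDensity fun x => ENNReal.ofReal (w a b x)

theorem isFiniteMeasure_jacobiMeasure (ha : -1 < a) (hb : -1 < b) :
    IsFiniteMeasure (jacobiMeasure a b) :=
  isFiniteMeasure_withDensity_ofReal ((intervalIntegrable_iff_integrableOn_Ioo_of_le
    (by norm_num)).1 (intervalIntegrable_w ha hb)).2

theorem ae_jacobiMeasure_of_ae_volume {P : ℝ → Prop} (h : ∀ᵐ x, x ∈ Ioo (-1 : ℝ) 1 → P x) :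
    ∀ᵐ x ∂jacobiMeasure a b, P x :=
  withDensity_absolutelyContinuous _ _ ((ae_restrict_iff' measurableSet_Ioo).2 h)

theorem setIntegral_jacobiMeasure {s : Set ℝ} (hs : MeasurableSet s) (hsub : s ⊆ Ioo (-1) 1)
    (f : ℝ → ℝ) : ∫ x in s, f x ∂jacobiMeasure a b = ∫ x in s, f x * w a b x := by
  rw [jacobiMeasure, setIntegral_withDensity_eq_setIntegral_toReal_smul
    (measurable_w a b).ennreal_ofReal (by simp) f hs, Measure.restrict_restrict hs,
    inter_eq_self_of_subset_left hsub]
  refine setIntegral_congr_fun hs fun x hx => ?_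
  rw [ENNReal.toReal_ofReal (w_pos (hsub hx)).le, smul_eq_mul, mul_comm]

theorem integral_jacobiMeasure (f : ℝ → ℝ) :
    ∫ x, f x ∂jacobiMeasure a b = ∫ x in Ioo (-1) 1, f x * w a b x := by
  rw [← setIntegral_jacobiMeasure measurableSet_Ioo subset_rfl, jacobiMeasure,
    restrict_withDensity measurableSet_Ioo, Measure.restrict_restrict measurableSet_Ioo, inter_self]

theorem integrable_jacobiMeasure_iff {f : ℝ → ℝ} :
    Integrable f (jacobiMeasure a b) ↔ IntegrableOn (fun x => f x * w a b x) (Ioo (-1) 1) := by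
  rw [jacobiMeasure, integrable_withDensity_iff (measurable_w a b).ennreal_ofReal (by simp)]
  refine integrableOn_congr_fun (fun x hx => ?_) measurableSet_Ioo
  rw [ENNReal.toReal_ofReal (w_pos hx).le]

theorem measureReal_jacobiMeasure_Ioo {x : ℝ} (hx : x ∈ Ioo (-1) 1) :
    (jacobiMeasure a b).real (Ioo x 1) = ∫ t in x..1, w a b t := by
  rw [← setIntegral_one_eq_measureReal, setIntegral_jacobiMeasure measurableSet_Ioo
    (Ioo_subset_Ioo_left hx.1.le), intervalIntegral.integral_of_le hx.2.le,
    integral_Ioc_eq_integral_Ioo]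
  simp

theorem intervalIntegrable_mul_w {g : ℝ → ℝ} (hg : Integrable g (jacobiMeasure a b)) :
    IntervalIntegrable (fun x => g x * w a b x) volume (-1) 1 :=
  (intervalIntegrable_iff_integrableOn_Ioo_of_le (by norm_num)).2
    (integrable_jacobiMeasure_iff.1 hg)

theorem intervalIntegrable_mul_w_of_mem {g : ℝ → ℝ} (hg : Integrable g (jacobiMeasure a b)) {x : ℝ}
    (hx : x ∈ Ioo (-1) 1) : IntervalIntegrable (fun y => g y * w a b y) volume 1 x :=
  (intervalIntegrable_mul_w hg).symm.mono_set
    (uIcc_subset_uIcc left_mem_uIcc (mem_uIcc_of_ge hx.1.le hx.2.le))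

theorem integral_w_le_of_nonneg {x : ℝ} (ha : -1 < a) (hx : x ∈ Ico 0 1) :
    ∫ t in x..1, w a b t ≤ 2 ^ |b| / (a + 1) * w (a + 1) 0 x := by
  have ha' : a + 1 ≠ 0 := by linarith
  have hint : IntervalIntegrable (fun t : ℝ => (1 - t) ^ a) volume x 1 := by
    simpa using (intervalIntegral.intervalIntegrable_rpow' (a := 1 - x) (b := 0) ha).comp_sub_left 1
  have hle : ∀ t ∈ Ioo x 1, w a b t ≤ 2 ^ |b| * (1 - t) ^ a := by
    intro t ht
    have ht₁ : 1 ≤ 1 + t := by linarith [hx.1, ht.1]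
    rw [w, mul_comm]
    have : 0 ≤ 1 - t := by linarith [ht.2]
    gcongr
    calc (1 + t) ^ b ≤ (1 + t) ^ |b| := Real.rpow_le_rpow_of_exponent_le ht₁ (le_abs_self b)
      _ ≤ 2 ^ |b| := Real.rpow_le_rpow (by linarith) (by linarith [ht.2]) (abs_nonneg b)
  calc ∫ t in x..1, w a b t
      ≤ ∫ t in x..1, 2 ^ |b| * (1 - t) ^ a := by
        rw [intervalIntegral.integral_of_le hx.2.le, intervalIntegral.integral_of_le hx.2.le,
          integral_Ioc_eq_integral_Ioo, integral_Ioc_eq_integral_Ioo]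
        refine integral_mono_of_nonneg ?_ ((intervalIntegrable_iff_integrableOn_Ioo_of_le
          hx.2.le).1 (hint.const_mul _)) ?_
        · filter_upwards [ae_restrict_mem measurableSet_Ioo] with t ht
          exact (w_pos ⟨by linarith [hx.1, ht.1], ht.2⟩).le
        · exact ae_restrict_of_forall_mem measurableSet_Ioo hle
    _ = 2 ^ |b| / (a + 1) * w (a + 1) 0 x := by
        rw [intervalIntegral.integral_const_mul,
          intervalIntegral.integral_comp_sub_left (fun t => t ^ a) 1, integral_rpow (Or.inl ha),
          sub_self, Real.zero_rpow ha', w_zero_right]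
        ring

theorem exists_integral_w_le (ha : -1 < a) (hb : -1 < b) :
    ∃ C, 0 ≤ C ∧ ∀ x ∈ Ioo (-1) 1, ∫ t in x..1, w a b t ≤ C * w (a + 1) 0 x := by
  have ha' : 0 < a + 1 := by linarith
  set I := ∫ t in (-1)..1, w a b t
  have hI : 0 ≤ I := intervalIntegral.integral_nonneg (by norm_num) fun t ht => w_nonneg ht
  refine ⟨2 ^ |b| / (a + 1) + I, by positivity, fun x hx => ?_⟩
  have hw : 0 < w (a + 1) 0 x := w_pos hx
  rw [add_mul]
  rcases le_or_gt 0 x with h | h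
  · exact (integral_w_le_of_nonneg ha ⟨h, hx.2⟩).trans (le_add_of_nonneg_right (by positivity))
  · have hone : 1 ≤ w (a + 1) 0 x := by
      rw [w_zero_right]
      exact Real.one_le_rpow (by linarith) ha'.le
    have hmono : ∫ t in x..1, w a b t ≤ I :=
      intervalIntegral.integral_mono_interval hx.1.le hx.2.le le_rfl
        (ae_restrict_of_forall_mem measurableSet_Ioc fun t ht => w_nonneg ⟨ht.1.le, ht.2⟩)
        (intervalIntegrable_w ha hb)
    exact (hmono.trans (le_mul_of_one_le_right hI hone)).trans
      (le_add_of_nonneg_left (by positivity))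

theorem integral_norm_mul_w_eq {x : ℝ} (hx : x ∈ Ioo (-1) 1) (g : ℝ → ℝ) :
    ∫ t in x..1, ‖g t * w a b t‖ = ∫ t in Ioo x 1, ‖g t‖ ∂jacobiMeasure a b := by
  have hsub : Ioo x 1 ⊆ Ioo (-1) 1 := Ioo_subset_Ioo_left hx.1.le
  rw [setIntegral_jacobiMeasure measurableSet_Ioo hsub, intervalIntegral.integral_of_le hx.2.le,
    integral_Ioc_eq_integral_Ioo]
  refine setIntegral_congr_fun measurableSet_Ioo fun t ht => ?_
  rw [norm_mul, Real.norm_of_nonneg (w_pos (hsub ht)).le]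

theorem exists_integral_norm_mul_w_le (ha : -1 < a) (hb : -1 < b) {q : ℝ≥0∞} (hq : 1 ≤ q) :
    ∃ C, 0 ≤ C ∧ ∀ g, MemLp g q (jacobiMeasure a b) → ∀ x ∈ Ioo (-1) 1,
      ∫ t in x..1, ‖g t * w a b t‖ ≤
        C * lpNorm g q (jacobiMeasure a b) * w ((a + 1) * (1 - 1 / q.toReal)) 0 x := by
  have := isFiniteMeasure_jacobiMeasure ha hb
  obtain ⟨C, hC, hmass⟩ := exists_integral_w_le ha hb
  refine ⟨C ^ (1 - 1 / q.toReal), by positivity, fun g hg x hx => ?_⟩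
  have hx' : 0 ≤ w (a + 1) 0 x := (w_pos hx).le
  have hθ : 0 ≤ 1 - 1 / q.toReal := one_sub_one_div_toReal_nonneg hq
  calc ∫ t in x..1, ‖g t * w a b t‖
      ≤ lpNorm g q (jacobiMeasure a b) * (∫ t in x..1, w a b t) ^ (1 - 1 / q.toReal) := by
        rw [integral_norm_mul_w_eq hx, ← measureReal_jacobiMeasure_Ioo hx]
        exact setIntegral_norm_le_lpNorm_mul_rpow hq hg _
    _ ≤ lpNorm g q (jacobiMeasure a b) * (C * w (a + 1) 0 x) ^ (1 - 1 / q.toReal) := by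
        gcongr
        · exact lpNorm_nonneg
        · exact intervalIntegral.integral_nonneg hx.2.le fun t ht =>
            w_nonneg ⟨hx.1.le.trans ht.1, ht.2⟩
        · exact hmass x hx
    _ = C ^ (1 - 1 / q.toReal) * lpNorm g q (jacobiMeasure a b) *
          w ((a + 1) * (1 - 1 / q.toReal)) 0 x := by
        rw [Real.mul_rpow hC hx', w_rpow hx, zero_mul]
        ring

variable {q : ℝ≥0∞} {g : ℝ → ℝ}

theorem LpW_eq_lpNorm (hq₀ : q ≠ 0) (hq : q ≠ ⊤)
    (hg : AEStronglyMeasurable g (jacobiMeasure a b)) :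
    LpW a b q g = lpNorm g q (jacobiMeasure a b) := by
  rw [LpW, if_neg hq, lpNorm_eq_integral_norm_rpow_toReal hq₀ hq hg, integral_jacobiMeasure,
    one_div]
  rfl

theorem abs_le_LpW_top (hg : BddAbove ((fun x => |g x|) '' Icc (-1) 1)) {x : ℝ}
    (hx : x ∈ Icc (-1) 1) : |g x| ≤ LpW a b ⊤ g := by
  rw [LpW, if_pos rfl]
  exact le_csSup hg (mem_image_of_mem _ hx)

theorem LpW_top_le {C : ℝ} (h : ∀ x ∈ Icc (-1) 1, |g x| ≤ C) : LpW a b ⊤ g ≤ C := by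
  rw [LpW, if_pos rfl]
  exact csSup_le (Nonempty.image _ ⟨0, by norm_num⟩) (forall_mem_image.2 h)

theorem ae_abs_le_LpW_top (hg : BddAbove ((fun x => |g x|) '' Icc (-1) 1)) :
    ∀ᵐ x ∂jacobiMeasure a b, ‖g x‖ ≤ LpW a b ⊤ g :=
  ae_jacobiMeasure_of_ae_volume (.of_forall fun _ hx => abs_le_LpW_top hg (Ioo_subset_Icc_self hx))

theorem memLp_jacobiMeasure (hq₀ : q ≠ 0) (hg : Measurable g)
    (hint : q ≠ ⊤ → IntegrableOn (fun x => |g x| ^ q.toReal * w a b x) (Ioo (-1) 1))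
    (hbdd : q = ⊤ → BddAbove ((fun x => |g x|) '' Icc (-1) 1)) :
    MemLp g q (jacobiMeasure a b) := by
  rcases eq_or_ne q ⊤ with rfl | hq
  · exact memLp_top_of_bound hg.aestronglyMeasurable _ (ae_abs_le_LpW_top (hbdd rfl))
  · exact (integrable_norm_rpow_iff hg.aestronglyMeasurable hq₀ hq).1
      (integrable_jacobiMeasure_iff.2 (hint hq))

theorem lpNorm_top_le_LpW (hg : Measurable g)
    (hbdd : BddAbove ((fun x => |g x|) '' Icc (-1) 1)) :
    lpNorm g ⊤ (jacobiMeasure a b) ≤ LpW a b ⊤ g := by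
  have hnonneg : 0 ≤ LpW a b ⊤ g :=
    (abs_nonneg _).trans (abs_le_LpW_top hbdd (x := 0) (by norm_num))
  rw [← toReal_eLpNorm hg.aestronglyMeasurable]
  exact ENNReal.toReal_le_of_le_ofReal hnonneg
    (by simpa using eLpNorm_le_of_ae_bound (p := ⊤) (ae_abs_le_LpW_top hbdd))

end JacobiMeasure

section DualityFunction

open Filter Topology

theorem integral_sub_pow_mul_eq_repeatedIntegral (b : ℝ) (n : ℕ) (f : ℝ → ℝ) (t : ℝ) :
    ∫ y in t..b, (y - t) ^ n / n.factorial * f y = (-1) ^ (n + 1) * repeatedIntegral b n f t := by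
  rw [intervalIntegral.integral_symm, repeatedIntegral, pow_succ, mul_neg_one, neg_mul,
    ← intervalIntegral.integral_const_mul]
  congr 1
  refine intervalIntegral.integral_congr fun y _ => ?_
  simp only [← neg_sub t y, neg_pow (t - y)]
  ring

variable {α β d x : ℝ} {s k : ℕ} {g : ℝ → ℝ}

theorem u_eq_repeatedIntegral (hx : x ∈ Ioo (-1) 1) :
    u α β s k g x = (-1) ^ (s - k - 1 + 1) * repeatedIntegral (-1) (s - 1)
      (w (-α) (-β) * repeatedIntegral 1 (s - k - 1) fun y => g y * w α β y) x := by
  rw [u, repeatedIntegral, ← intervalIntegral.integral_const_mul,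
    intervalIntegral.integral_of_le hx.1.le, intervalIntegral.integral_of_le hx.1.le]
  refine setIntegral_congr_fun measurableSet_Ioc fun t ht => ?_
  simp only [mul_assoc, Pi.mul_apply]
  rw [integral_sub_pow_mul_eq_repeatedIntegral 1 (s - k - 1) (fun y => g y * w α β y),
    one_div_w ⟨ht.1, ht.2.trans_lt hx.2⟩]
  ring

theorem abs_iteratedDeriv_u_le (hks : k + 1 ≤ s)
    (hg : Integrable g (jacobiMeasure α β)) (hx : x ∈ Ioo (-1) 1) :
    |iteratedDeriv (2 * s - k) (u α β s k g) x| ≤ |iteratedDeriv (s - k)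
      (w (-α) (-β) * repeatedIntegral 1 (s - k - 1) fun y => g y * w α β y) x| := by
  set F := w (-α) (-β) * repeatedIntegral 1 (s - k - 1) fun y => g y * w α β y
  have hF : ContinuousOn F (Ioo (-1) 1) := by
    refine ContinuousOn.mul (fun y hy => ?_) fun y hy => ?_
    · exact (contDiffAt_w (n := 0) hy).continuousAt.continuousWithinAt
    · exact (contDiffAt_repeatedIntegral _ (eventually_of_mem (Ioo_mem_nhds hy.1 hy.2)
        fun z => intervalIntegrable_mul_w_of_mem hg)).continuousAt.continuousWithinAt
  have hu : u α β s k g =ᶠ[𝓝 x]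
      fun y => (-1) ^ (s - k - 1 + 1) * repeatedIntegral (-1) (s - 1) F y :=
    eventually_of_mem (Ioo_mem_nhds hx.1 hx.2) fun y hy => u_eq_repeatedIntegral hy
  rw [hu.iteratedDeriv_eq, iteratedDeriv_const_mul_field, abs_mul, abs_pow, abs_neg, abs_one,
    one_pow, one_mul, show 2 * s - k = s - k + (s - 1 + 1) by omega]
  exact abs_iteratedDeriv_repeatedIntegral_le (s - k) (s - 1) hF hx

theorem exists_abs_iteratedDeriv_u_le (hks : k + 1 ≤ s)
    (hd : WeightDerivBound (-α) (-β) d (s - k - 1)) :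
    ∃ C, 0 < C ∧ ∀ g, Integrable g (jacobiMeasure α β) → ∀ x ∈ Ioo (-1) 1,
      |iteratedDeriv (2 * s - k) (u α β s k g) x| ≤
        C * (|deriv (repeatedIntegral 1 0 fun y => g y * w α β y) x| / w α β x +
          w (-α - 1) d x * ∫ t in x..1, ‖g t * w α β t‖) := by
  obtain ⟨K, hK, hbound⟩ := hd
  refine ⟨2 ^ (s - k - 1) * (1 + 2 * K), by positivity, fun g hg x hx => ?_⟩
  set D := |deriv (repeatedIntegral 1 0 fun y => g y * w α β y) x|
  have htail : |∫ t in 1..x, ‖g t * w α β t‖| = ∫ t in x..1, ‖g t * w α β t‖ := by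
    rw [intervalIntegral.integral_symm, abs_neg, abs_of_nonneg]
    exact intervalIntegral.integral_nonneg hx.2.le fun t _ => norm_nonneg _
  have hD : w (-α) (-β) x * D = D / w α β x := by rw [← one_div_w hx]; ring
  have hDw : 0 ≤ D / w α β x := div_nonneg (abs_nonneg _) (w_pos hx).le
  have hS : 0 ≤ w (-α - 1) d x * ∫ t in x..1, ‖g t * w α β t‖ :=
    mul_nonneg (w_pos hx).le (htail ▸ abs_nonneg _)
  have hleibniz := abs_iteratedDeriv_mul_repeatedIntegral_le (m := s - k - 1)
    (contDiffAt_w hx) (w_pos hx).ne'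
    (eventually_of_mem (Ioo_mem_nhds hx.1 hx.2) fun y => intervalIntegrable_mul_w_of_mem hg)
    fun i hi => hbound i hi x hx
  rw [htail, abs_of_pos (w_pos hx), hD, show s - k - 1 + 1 = s - k by omega] at hleibniz
  calc |iteratedDeriv (2 * s - k) (u α β s k g) x|
      ≤ 2 ^ (s - k - 1) * (D / w α β x +
          2 * K * (w (-α - 1) d x * ∫ t in x..1, ‖g t * w α β t‖)) := by
        refine (abs_iteratedDeriv_u_le hks hg hx).trans (hleibniz.trans_eq ?_)
        ring
    _ ≤ 2 ^ (s - k - 1) * ((1 + 2 * K) * (D / w α β x +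
          w (-α - 1) d x * ∫ t in x..1, ‖g t * w α β t‖)) := by
        gcongr
        nlinarith [mul_nonneg hK hDw]
    _ = _ := by ring

theorem exists_sqrt_mul_w_mul_integral_le (hα : -1 < α) (hβ : -1 < β) (d : ℝ) {q : ℝ≥0∞}
    (hq : 1 ≤ q) :
    ∃ C, 0 ≤ C ∧ ∀ g, MemLp g q (jacobiMeasure α β) → ∀ x ∈ Ioo (-1) 1,
      √(1 - x ^ 2) * (w (-α - 1) d x * ∫ t in x..1, ‖g t * w α β t‖) ≤
        C * (lpNorm g q (jacobiMeasure α β) *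
          w (1 / 2 - (α + 1) / q.toReal) (1 / 2 + d) x) := by
  obtain ⟨C, hC, htail⟩ := exists_integral_norm_mul_w_le hα hβ hq
  refine ⟨C, hC, fun g hg x hx => ?_⟩
  set A := lpNorm g q (jacobiMeasure α β)
  have hweight : √(1 - x ^ 2) * (w (-α - 1) d x * w ((α + 1) * (1 - 1 / q.toReal)) 0 x) =
      w (1 / 2 - (α + 1) / q.toReal) (1 / 2 + d) x := by
    rw [sqrt_one_sub_sq_eq_w hx, w_mul_w hx, w_mul_w hx]
    congr 1 <;> ring
  calc √(1 - x ^ 2) * (w (-α - 1) d x * ∫ t in x..1, ‖g t * w α β t‖)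
      ≤ √(1 - x ^ 2) * (w (-α - 1) d x * (C * A * w ((α + 1) * (1 - 1 / q.toReal)) 0 x)) := by
        gcongr
        · exact (w_pos hx).le
        · exact htail g hg x hx
    _ = C * (A * w (1 / 2 - (α + 1) / q.toReal) (1 / 2 + d) x) := by rw [← hweight]; ring

theorem exists_abs_sqrt_pow_mul_iteratedDeriv_u_le (hα : -1 < α) (hβ : -1 < β) (hks : k + 1 ≤ s)
    (hd : WeightDerivBound (-α) (-β) d (s - k - 1)) {q : ℝ≥0∞} (hq : 1 ≤ q) :
    ∃ C, 0 < C ∧ ∀ g, MemLp g q (jacobiMeasure α β) → ∀ x ∈ Ioo (-1) 1,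
      |√(1 - x ^ 2) ^ (s - k) * iteratedDeriv (2 * s - k) (u α β s k g) x| ≤
        C * (|deriv (repeatedIntegral 1 0 fun y => g y * w α β y) x| / w α β x +
          lpNorm g q (jacobiMeasure α β) * w (1 / 2 - (α + 1) / q.toReal) (1 / 2 + d) x) := by
  have := isFiniteMeasure_jacobiMeasure hα hβ
  obtain ⟨C₁, hC₁, hderiv⟩ := exists_abs_iteratedDeriv_u_le hks hd
  obtain ⟨C₂, hC₂, htail⟩ := exists_sqrt_mul_w_mul_integral_le hα hβ d hq
  refine ⟨C₁ * (1 + C₂), by positivity, fun g hg x hx => ?_⟩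
  set A := lpNorm g q (jacobiMeasure α β)
  set D := |deriv (repeatedIntegral 1 0 fun y => g y * w α β y) x|
  have hA : 0 ≤ A := lpNorm_nonneg
  have hD : 0 ≤ D / w α β x := div_nonneg (abs_nonneg _) (w_pos hx).le
  have hR : 0 ≤ w (1 / 2 - (α + 1) / q.toReal) (1 / 2 + d) x := (w_pos hx).le
  have hφ : √(1 - x ^ 2) ≤ 1 := Real.sqrt_le_one.2 (by nlinarith [sq_nonneg x])
  have hφpow : √(1 - x ^ 2) ^ (s - k) ≤ √(1 - x ^ 2) :=
    pow_le_of_le_one (Real.sqrt_nonneg _) hφ (by omega)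
  rw [abs_mul, abs_of_nonneg (by positivity)]
  calc √(1 - x ^ 2) ^ (s - k) * |iteratedDeriv (2 * s - k) (u α β s k g) x|
      ≤ √(1 - x ^ 2) *
          (C₁ * (D / w α β x + w (-α - 1) d x * ∫ t in x..1, ‖g t * w α β t‖)) := by
        gcongr
        exact hderiv g (hg.integrable hq) x hx
    _ ≤ C₁ * (D / w α β x + C₂ * (A * w (1 / 2 - (α + 1) / q.toReal) (1 / 2 + d) x)) := by
        rw [mul_left_comm, mul_add]
        exact mul_le_mul_of_nonneg_left
          (add_le_add (mul_le_of_le_one_left hD hφ) (htail g hg x hx)) hC₁.le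
    _ ≤ C₁ * ((1 + C₂) * (D / w α β x +
          A * w (1 / 2 - (α + 1) / q.toReal) (1 / 2 + d) x)) := by
        gcongr
        nlinarith [mul_nonneg hC₂ hD, mul_nonneg hA hR]
    _ = _ := by ring

end DualityFunction

section NormBound

open Filter Topology

variable {α β d : ℝ} {s k : ℕ} {q : ℝ≥0∞}

theorem memLp_w (hq₀ : q ≠ 0) (hq : q ≠ ⊤) (hdq : -1 < (1 / 2 + d) * q.toReal + β) :
    MemLp (w (1 / 2 - (α + 1) / q.toReal) (1 / 2 + d)) q (jacobiMeasure α β) := by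
  have hQ : 0 < q.toReal := ENNReal.toReal_pos hq₀ hq
  refine (integrable_norm_rpow_iff (measurable_w _ _).aestronglyMeasurable hq₀ hq).1
    (integrable_jacobiMeasure_iff.2 ?_)
  have hint : IntegrableOn (w (q.toReal / 2 - 1) ((1 / 2 + d) * q.toReal + β)) (Ioo (-1) 1) :=
    (intervalIntegrable_iff_integrableOn_Ioo_of_le (by norm_num)).1
      (intervalIntegrable_w (by linarith) hdq)
  refine hint.congr_fun (fun x hx => ?_) measurableSet_Ioo
  simp only [Real.norm_of_nonneg (w_pos hx).le]
  rw [w_rpow hx, w_mul_w hx]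
  congr 1
  field_simp
  ring

theorem ae_abs_deriv_repeatedIntegral_div_w {g : ℝ → ℝ} (hg : Integrable g (jacobiMeasure α β)) :
    ∀ᵐ x ∂jacobiMeasure α β,
      |deriv (repeatedIntegral 1 0 fun y => g y * w α β y) x| / w α β x = |g x| := by
  refine ae_jacobiMeasure_of_ae_volume ?_
  filter_upwards [(intervalIntegrable_mul_w hg).ae_hasDerivAt_integral] with x hx hmem
  have hderiv := hx (by rw [uIcc_of_le (by norm_num)]; exact Ioo_subset_Icc_self hmem) 1
    right_mem_uIcc
  rw [repeatedIntegral_zero, hderiv.deriv, abs_mul, abs_of_pos (w_pos hmem),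
    mul_div_cancel_right₀ _ (w_pos hmem).ne']

theorem abs_deriv_repeatedIntegral_div_w_le {g : ℝ → ℝ} {M x : ℝ}
    (hg : Integrable g (jacobiMeasure α β)) (hM : ∀ y ∈ Ioo (-1) 1, |g y| ≤ M)
    (hx : x ∈ Ioo (-1) 1) :
    |deriv (repeatedIntegral 1 0 fun y => g y * w α β y) x| / w α β x ≤ M := by
  have hnhds := Ioo_mem_nhds hx.1 hx.2
  rw [div_le_iff₀ (w_pos hx)]
  refine abs_deriv_repeatedIntegral_zero_le (h := fun y => M * w α β y)
    (eventually_of_mem hnhds fun y => intervalIntegrable_mul_w_of_mem hg)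
    (eventually_of_mem hnhds fun y hy => (contDiffAt_w (n := 0) hy).continuousAt.const_mul M)
    (eventually_of_mem hnhds fun y hy => ?_)
  rw [abs_mul, abs_of_pos (w_pos hy)]
  exact mul_le_mul_of_nonneg_right (hM y hy) (w_pos hy).le

theorem measurable_sqrt_pow_mul_iteratedDeriv (m n : ℕ) (hn : n ≠ 0) (f : ℝ → ℝ) :
    Measurable fun x => √(1 - x ^ 2) ^ m * iteratedDeriv n f x := by
  obtain ⟨n, rfl⟩ := Nat.exists_eq_succ_of_ne_zero hn
  rw [iteratedDeriv_succ]
  have := measurable_deriv (iteratedDeriv n f)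
  fun_prop

theorem exists_LpW_iteratedDeriv_u_le_of_ne_top (hα : -1 < α) (hβ : -1 < β) (hks : k + 1 ≤ s)
    (hd : WeightDerivBound (-α) (-β) d (s - k - 1)) (hq₁ : 1 ≤ q) (hq : q ≠ ⊤)
    (hdq : -1 < (1 / 2 + d) * q.toReal + β) :
    ∃ c, 0 < c ∧ ∀ g : ℝ → ℝ, MemLp g q (jacobiMeasure α β) →
      LpW α β q (fun x => √(1 - x ^ 2) ^ (s - k) * iteratedDeriv (2 * s - k) (u α β s k g) x) ≤
        c * LpW α β q g := by
  have hq₀ : q ≠ 0 := (zero_lt_one.trans_le hq₁).ne'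
  have := isFiniteMeasure_jacobiMeasure hα hβ
  obtain ⟨C, hC, hbound⟩ := exists_abs_sqrt_pow_mul_iteratedDeriv_u_le hα hβ hks hd hq₁
  set R := w (1 / 2 - (α + 1) / q.toReal) (1 / 2 + d)
  set N := fun f : ℝ → ℝ => lpNorm f q (jacobiMeasure α β)
  have hN : ∀ f, 0 ≤ N f := fun f => lpNorm_nonneg
  have hR : MemLp R q (jacobiMeasure α β) := memLp_w hq₀ hq hdq
  refine ⟨C * (1 + N R), by have := hN R; positivity, fun g hg => ?_⟩
  rw [LpW_eq_lpNorm hq₀ hq hg.1, LpW_eq_lpNorm hq₀ hq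
    (measurable_sqrt_pow_mul_iteratedDeriv _ _ (by omega) _).aestronglyMeasurable]
  calc N _ ≤ N (C • ((fun x => ‖g x‖) + N g • R)) := by
        refine lpNorm_mono_ae_real ((hg.norm.add (hR.const_smul _)).const_smul _) ?_
        filter_upwards [ae_abs_deriv_repeatedIntegral_div_w (hg.integrable hq₁),
          ae_jacobiMeasure_of_ae_volume (.of_forall (hbound g hg))] with x hderiv hx
        rwa [hderiv] at hx
    _ = C * N ((fun x => ‖g x‖) + N g • R) := by
        simp only [N, lpNorm_const_smul, coe_nnnorm, Real.norm_of_nonneg hC.le]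
    _ ≤ C * (N g + N g * N R) := by
        gcongr
        refine (lpNorm_add_le hg.norm hq₁).trans_eq ?_
        rw [lpNorm_norm hg.1, lpNorm_const_smul, coe_nnnorm, Real.norm_of_nonneg (hN g)]
    _ = C * (1 + N R) * N g := by ring

theorem exists_LpW_top_iteratedDeriv_u_le (hα : -1 < α) (hβ : -1 < β) (hks : k + 1 ≤ s)
    (hd : WeightDerivBound (-α) (-β) d (s - k - 1)) (hd' : 0 ≤ 1 / 2 + d) :
    ∃ c, 0 < c ∧ ∀ g : ℝ → ℝ, Measurable g → BddAbove ((fun x => |g x|) '' Icc (-1) 1) →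
      LpW α β ⊤ (fun x => √(1 - x ^ 2) ^ (s - k) * iteratedDeriv (2 * s - k) (u α β s k g) x) ≤
        c * LpW α β ⊤ g := by
  have := isFiniteMeasure_jacobiMeasure hα hβ
  obtain ⟨C, hC, hbound⟩ := exists_abs_sqrt_pow_mul_iteratedDeriv_u_le hα hβ hks hd le_top
  refine ⟨C * (1 + 2 ^ (1 / 2 : ℝ) * 2 ^ (1 / 2 + d)), by positivity, fun g hg hbdd => ?_⟩
  have hgM : ∀ x ∈ Icc (-1) 1, |g x| ≤ LpW α β ⊤ g := fun x hx => abs_le_LpW_top hbdd hx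
  have hM : 0 ≤ LpW α β ⊤ g := (abs_nonneg _).trans (hgM 0 (by norm_num))
  have hLp := memLp_jacobiMeasure (a := α) (b := β) top_ne_zero hg (by simp) fun _ => hbdd
  refine LpW_top_le fun x hx => ?_
  by_cases hxI : x ∈ Ioo (-1) 1
  · have hweight : w (1 / 2 - (α + 1) / (⊤ : ℝ≥0∞).toReal) (1 / 2 + d) x ≤
        2 ^ (1 / 2 : ℝ) * 2 ^ (1 / 2 + d) := by
      simp only [ENNReal.toReal_top, _root_.div_zero, _root_.sub_zero]
      exact w_le_of_nonneg (by norm_num) hd' hx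
    calc _ ≤ C * (|deriv (repeatedIntegral 1 0 fun y => g y * w α β y) x| / w α β x +
          lpNorm g ⊤ (jacobiMeasure α β) *
            w (1 / 2 - (α + 1) / (⊤ : ℝ≥0∞).toReal) (1 / 2 + d) x) := hbound g hLp x hxI
      _ ≤ C * (LpW α β ⊤ g + LpW α β ⊤ g * (2 ^ (1 / 2 : ℝ) * 2 ^ (1 / 2 + d))) := by
        have hderiv := abs_deriv_repeatedIntegral_div_w_le (hLp.integrable le_top)
          (fun y hy => hgM y (Ioo_subset_Icc_self hy)) hxI
        have hnorm : lpNorm g ⊤ (jacobiMeasure α β) ≤ LpW α β ⊤ g := lpNorm_top_le_LpW hg hbdd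
        have := w_nonneg (a := 1 / 2 - (α + 1) / (⊤ : ℝ≥0∞).toReal) (b := 1 / 2 + d) hx
        gcongr
      _ = _ := by ring
  · have hφ : √(1 - x ^ 2) = 0 := by
      refine Real.sqrt_eq_zero'.2 ?_
      by_contra! h
      exact hxI (abs_lt.1 ((sq_lt_one_iff_abs_lt_one x).1 (by linarith)))
    rw [hφ, zero_pow (by omega), zero_mul, abs_zero]
    positivity

theorem neg_one_lt_of_lt_half_conjExponent_sub_one {p : ℝ≥0∞} [ENNReal.HolderConjugate p q]
    (hq : q ≠ ⊤) (hβp : p ≠ ⊤ → β < p.toReal / 2 - 1) :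
    -1 < (1 / 2 + (-β - 1)) * q.toReal + β := by
  rcases eq_or_ne p ⊤ with rfl | hp
  · obtain rfl : q = 1 := (ENNReal.HolderConjugate.eq_top_iff_eq_one ⊤ q).1 rfl
    rw [ENNReal.toReal_one]
    linarith
  · have hconj : p.toReal.HolderConjugate q.toReal :=
      ENNReal.HolderConjugate.toReal_of_ne_top hp hq
    have hlt := mul_lt_mul_of_pos_right (hβp hp) hconj.symm.sub_one_pos
    linarith [hconj.mul_eq_add]

theorem exists_weightDerivBound_with_exponent {p : ℝ≥0∞} [ENNReal.HolderConjugate p q]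
    (hcond : β = 0 ∨ (k + 1 = s ∧ (q ≠ ⊤ → p ≠ ⊤ → β < p.toReal / 2 - 1) ∧
      (q = ⊤ → β ≤ -(1 / 2)))) :
    ∃ d, WeightDerivBound (-α) (-β) d (s - k - 1) ∧
      (q ≠ ⊤ → -1 < (1 / 2 + d) * q.toReal + β) ∧ (q = ⊤ → 0 ≤ 1 / 2 + d) := by
  rcases hcond with rfl | ⟨rfl, hfin, htop⟩
  · refine ⟨0, by simpa using weightDerivBound_zero_right (-α) _, fun _ => ?_, by norm_num⟩
    linarith [q.toReal_nonneg]
  · refine ⟨-β - 1, by simpa using weightDerivBound_zero (-α) (-β), fun hq' => ?_,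
      fun hq' => by linarith [htop hq']⟩
    exact neg_one_lt_of_lt_half_conjExponent_sub_one hq' (hfin hq')

end NormBound

theorem statement18_general (α β : ℝ) (hα : -1 < α) (hβ : -1 < β)
    (s k : ℕ) (hk : k + 1 ≤ s)
    (p q : ℝ≥0∞) (hq : 1 ≤ q) (hpq : 1 / p + 1 / q = 1)
    (hcond : β = 0 ∨ (k + 1 = s ∧ (q ≠ ⊤ → p ≠ ⊤ → β < p.toReal / 2 - 1)
      ∧ (q = ⊤ → β ≤ -(1 / 2)))) :
    ∃ c : ℝ, 0 < c ∧ ∀ g : ℝ → ℝ, Measurable g →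
      (q ≠ ⊤ → IntegrableOn (fun x => |g x| ^ q.toReal * w α β x) (Ioo (-1 : ℝ) 1)) →
      (q = ⊤ → BddAbove ((fun x => |g x|) '' Icc (-1 : ℝ) 1)) →
      LpW α β q (fun x =>
          Real.sqrt (1 - x ^ 2) ^ (s - k) * iteratedDeriv (2 * s - k) (u α β s k g) x)
        ≤ c * LpW α β q g := by
  have : ENNReal.HolderConjugate p q :=
    ENNReal.holderConjugate_iff.2 (by simpa only [one_div] using hpq)
  obtain ⟨d, hd, hfin, htop⟩ := exists_weightDerivBound_with_exponent (p := p) hcond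
  rcases eq_or_ne q ⊤ with rfl | hq'
  · obtain ⟨c, hc, hbound⟩ := exists_LpW_top_iteratedDeriv_u_le hα hβ hk hd (htop rfl)
    exact ⟨c, hc, fun g hg _ hbdd => hbound g hg (hbdd rfl)⟩
  · obtain ⟨c, hc, hbound⟩ :=
      exists_LpW_iteratedDeriv_u_le_of_ne_top hα hβ hk hd hq hq' (hfin hq')
    exact ⟨c, hc, fun g hg hint hbdd => hbound g (memLp_jacobiMeasure
      (zero_lt_one.trans_le hq).ne' hg hint hbdd)⟩

theorem statement18 (α β : ℝ) (hα : -1 < α) (hβ : -1 < β)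
    (s k : ℕ) (hs : 1 ≤ s) (hk : k ≤ s - 1)
    (p q : ℝ≥0∞) (hq : 1 ≤ q) (hpq : 1 / p + 1 / q = 1)
    (hcond : β = 0 ∨ (s = 1 ∧ (q ≠ ⊤ → p ≠ ⊤ → β < p.toReal / 2 - 1)
      ∧ (q = ⊤ → β ≤ -(1 / 2)))) :
    ∃ c : ℝ, 0 < c ∧ ∀ g : ℝ → ℝ, Measurable g →
      (q ≠ ⊤ → IntegrableOn (fun x => |g x| ^ q.toReal * w α β x) (Ioo (-1 : ℝ) 1)) →
      (q = ⊤ → BddAbove ((fun x => |g x|) '' Icc (-1 : ℝ) 1)) →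
      LpW α β q (fun x =>
          Real.sqrt (1 - x ^ 2) ^ (s - k) * iteratedDeriv (2 * s - k) (u α β s k g) x)
        ≤ c * LpW α β q g :=
  statement18_general α β hα hβ s k (by omega) p q hq hpq
    (hcond.imp_right fun h => ⟨by omega, h.2⟩)

end JacobiApprox
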